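/- The series ∑_{n=0}^∞ (∫_ℝ cos(x)·e_n(x) dx) · e_n(0) converges and its sum equals 1. (This is the e-product ⟨cos, δ⟩_e of the tempered distributions cos(x) and the Dirac delta δ, computed with respect to the Hermite basis.) -/

import Mathlib

open MeasureTheory Polynomial Filter Topology

/-- The physicists' Hermite polynomials: `H 0 = 1`, `H (n+1) = 2x·H n − (H n)'`. -/
noncomputable def hermiteH : ℕ → Polynomial ℝ
  | 0 => 1
  | n + 1 => 2 * X * hermiteH n - derivative (hermiteH n)

/-- The `n`-th Hermite function, an orthonormal basis of `L²(ℝ)`. -/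
noncomputable def hermiteFun (n : ℕ) (x : ℝ) : ℝ :=
  (Real.sqrt (2 ^ n * (n.factorial : ℝ) * Real.sqrt Real.pi))⁻¹
    * (hermiteH n).eval x * Real.exp (-x ^ 2 / 2)

/-!
Up to the factor `√(2π) iⁿ`, the Hermite function `eₙ` is its own Fourier transform. So the terms of
the series for `cos (ξ x)` are multiples of `eₙ(ξ) eₙ(0)`; those of odd index vanish, and the even
partial sums `S_M(ξ)` have a telescoping derivative, a multiple of `e_{2M+1}(ξ)`. Since
`eₙ'' = (x² - (2n + 1)) eₙ`, the energy `eₙ'² + (2n + 1 - x²) eₙ²` is greatest at `0`. Integrating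
the equation once then shows that the integral of `e_{2M+1}` over `[0, ξ]` is too small for
`S_M(ξ) - S_M(0)` to survive as `M → ∞`. Finally `S_M(0)` is, up to a constant, a partial sum of the
binomial series of `(1 + x) ^ (-1/2)` at `x = 1`, which Abel's theorem evaluates.
-/

section CentralBinomRatio

/-- The normalised central binomial coefficient `C(2m, m) / 4ᵐ`, which is the absolute value of the
generalised binomial coefficient `C(-1/2, m)`. -/
noncomputable def centralBinomRatio (m : ℕ) : ℝ := m.centralBinom / 4 ^ m

lemma centralBinomRatio_pos (m : ℕ) : 0 < centralBinomRatio m :=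
  div_pos (Nat.cast_pos.2 m.centralBinom_pos) (by positivity)

lemma centralBinomRatio_eq_factorial_div (m : ℕ) :
    centralBinomRatio m = (2 * m).factorial / (4 ^ m * (m.factorial : ℝ) ^ 2) := by
  rw [centralBinomRatio, Nat.centralBinom_eq_two_mul_choose, two_mul, Nat.cast_add_choose]
  field_simp

lemma centralBinomRatio_succ (m : ℕ) :
    (2 * (m : ℝ) + 2) * centralBinomRatio (m + 1) = (2 * m + 1) * centralBinomRatio m := by
  have h : ((m : ℝ) + 1) * (m + 1).centralBinom = 2 * (2 * m + 1) * m.centralBinom := by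
    exact_mod_cast m.succ_mul_centralBinom_succ
  simp only [centralBinomRatio, pow_succ]
  field_simp
  linarith

lemma centralBinomRatio_antitone : Antitone centralBinomRatio := by
  refine antitone_nat_of_succ_le fun m => ?_
  have h := centralBinomRatio_succ m
  have hpos := centralBinomRatio_pos m
  refine le_of_mul_le_mul_left (a := 2 * (m : ℝ) + 2) ?_ (by positivity)
  linarith

lemma centralBinomRatio_sq (m : ℕ) :
    centralBinomRatio m ^ 2 = (Real.Wallis.W m * (2 * m + 1))⁻¹ := by
  have hpow : (2 : ℝ) ^ (4 * m) = (4 ^ m) ^ 2 := by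
    rw [← pow_mul, mul_comm m, pow_mul, pow_mul]
    norm_num
  rw [centralBinomRatio_eq_factorial_div, Real.Wallis.W_eq_factorial_ratio, hpow]
  field_simp

lemma tendsto_centralBinomRatio : Tendsto centralBinomRatio atTop (𝓝 0) := by
  have hlin : Tendsto (fun m : ℕ => 2 * (m : ℝ) + 1) atTop atTop :=
    tendsto_atTop_add_const_right _ _ (tendsto_natCast_atTop_atTop.const_mul_atTop two_pos)
  have hsq : Tendsto (fun m => centralBinomRatio m ^ 2) atTop (𝓝 0) := by
    simp_rw [centralBinomRatio_sq]
    exact (Real.Wallis.tendsto_W_nhds_pi_div_two.pos_mul_atTop (by positivity)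
      hlin).inv_tendsto_atTop
  simpa only [Real.sqrt_sq (centralBinomRatio_pos _).le, Real.sqrt_zero] using hsq.sqrt

lemma choose_neg_half (m : ℕ) :
    Ring.choose (-1 / 2 : ℝ) m = (-1) ^ m * centralBinomRatio m := by
  induction m with
  | zero => simp [centralBinomRatio]
  | succ m ih =>
    have h := Ring.choose_smul_choose (-1 / 2 : ℝ) (n := m + 1) (k := m) m.le_succ
    simp only [Nat.choose_succ_self_right, nsmul_eq_mul, Nat.cast_add, Nat.cast_one, ih,
      add_tsub_cancel_left, Ring.choose_one_right] at h
    refine mul_left_cancel₀ (a := (m : ℝ) + 1) (by positivity) ?_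
    linear_combination h + (-1) ^ m / 2 * centralBinomRatio_succ m

lemma hasSum_choose_mul_pow (a : ℝ) {x : ℝ} (hx : |x| < 1) :
    HasSum (fun n => Ring.choose a n * x ^ n) ((1 + x) ^ a) := by
  have h := (Real.one_add_rpow_hasFPowerSeriesOnBall_zero (a := a)).hasSum (y := x)
    (by simpa [enorm_eq_nnnorm, ← NNReal.coe_lt_coe] using hx)
  simpa [binomialSeries_apply, -FormalMultilinearSeries.apply_eq_prod_smul_coeff, mul_comm] using h

lemma eq_two_rpow_of_tendsto_sum_choose {a l : ℝ}
    (h : Tendsto (fun N => ∑ n ∈ Finset.range N, Ring.choose a n) atTop (𝓝 l)) :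
    l = 2 ^ a := by
  have hcont : ContinuousAt (fun x : ℝ => (1 + x) ^ a) 1 :=
    ContinuousAt.rpow_const (by fun_prop) (by norm_num)
  have hlim := hcont.tendsto.mono_left (nhdsWithin_le_nhds (s := Set.Iio 1))
  rw [one_add_one_eq_two] at hlim
  refine tendsto_nhds_unique (Real.tendsto_tsum_powerSeries_nhdsWithin_lt h) (hlim.congr' ?_)
  filter_upwards [Ioo_mem_nhdsLT (show (-1 : ℝ) < 1 by norm_num)] with x hx
  exact (hasSum_choose_mul_pow a (abs_lt.2 hx)).tsum_eq.symm

lemma tendsto_sum_neg_one_pow_mul_centralBinomRatio :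
    Tendsto (fun N => ∑ m ∈ Finset.range N, (-1) ^ m * centralBinomRatio m) atTop
      (𝓝 (√2)⁻¹) := by
  obtain ⟨l, hl⟩ := centralBinomRatio_antitone.tendsto_alternating_series_of_tendsto_zero
    tendsto_centralBinomRatio
  have hval : l = 2 ^ (-1 / 2 : ℝ) :=
    eq_two_rpow_of_tendsto_sum_choose (by simpa only [choose_neg_half] using hl)
  rwa [hval, neg_div, Real.rpow_neg zero_le_two, ← Real.sqrt_eq_rpow] at hl

end CentralBinomRatio

section HermitePolynomial

lemma hermiteH_zero : hermiteH 0 = 1 := by rw [hermiteH]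

lemma hermiteH_succ (n : ℕ) :
    hermiteH (n + 1) = 2 * X * hermiteH n - derivative (hermiteH n) := by rw [hermiteH]

lemma hermiteH_one : hermiteH 1 = 2 * X := by
  simp [hermiteH_succ, hermiteH_zero]

lemma derivative_hermiteH_succ (n : ℕ) :
    derivative (hermiteH (n + 1)) = C (2 * (n + 1 : ℝ)) * hermiteH n := by
  have hC : (C 2 : ℝ[X]) = 2 := rfl
  induction n with
  | zero => simp [hermiteH_one, hermiteH_zero, hC]
  | succ n ih =>
    rw [hermiteH_succ (n + 1), derivative_sub, derivative_mul, ih, derivative_C_mul,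
      hermiteH_succ n]
    simp only [derivative_mul, derivative_ofNat, derivative_X, Nat.cast_add, Nat.cast_one,
      map_add, map_mul, map_one, hC]
    ring

lemma hermiteH_add_two (n : ℕ) :
    hermiteH (n + 2) = 2 * X * hermiteH (n + 1) - C (2 * (n + 1 : ℝ)) * hermiteH n := by
  rw [hermiteH_succ (n + 1), derivative_hermiteH_succ]

lemma eval_zero_hermiteH_odd (m : ℕ) : (hermiteH (2 * m + 1)).eval 0 = 0 := by
  induction m with
  | zero => simp [hermiteH_one]
  | succ m ih => simp [show 2 * (m + 1) + 1 = 2 * m + 1 + 2 by ring, hermiteH_add_two, ih]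

lemma eval_zero_hermiteH_even (m : ℕ) :
    (hermiteH (2 * m)).eval 0 = (-1) ^ m * (4 ^ m * m.factorial * centralBinomRatio m) := by
  induction m with
  | zero => simp [hermiteH_zero, centralBinomRatio]
  | succ m ih =>
    simp only [show 2 * (m + 1) = 2 * m + 2 by ring, hermiteH_add_two, eval_sub, eval_mul, eval_X,
      eval_C, ih, Nat.factorial_succ]
    push_cast
    linear_combination 2 * (-1) ^ m * 4 ^ m * m.factorial * centralBinomRatio_succ m

end HermitePolynomial

section HermiteGaussian

/-- The polynomial `P` times the Gaussian `exp (-x² / 2)`. -/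
noncomputable def polyGaussian (P : ℝ[X]) (x : ℝ) : ℝ := P.eval x * Real.exp (-x ^ 2 / 2)

/-- The Hermite function without its normalising constant, which keeps the recurrences free of
square roots. -/
noncomputable def hermiteGaussian (n : ℕ) : ℝ → ℝ := polyGaussian (hermiteH n)

lemma hasDerivAt_polyGaussian (P : ℝ[X]) (x : ℝ) :
    HasDerivAt (polyGaussian P) (polyGaussian (derivative P - X * P) x) x := by
  have hsq : HasDerivAt (fun y : ℝ => -y ^ 2 / 2) (-x) x :=
    ((hasDerivAt_pow 2 x).neg.div_const 2).congr_deriv (by push_cast; ring)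
  refine ((P.hasDerivAt x).mul hsq.exp).congr_deriv ?_
  simp only [polyGaussian, eval_sub, eval_mul, eval_X]
  ring

lemma continuous_polyGaussian (P : ℝ[X]) : Continuous (polyGaussian P) :=
  continuous_iff_continuousAt.2 fun x => (hasDerivAt_polyGaussian P x).continuousAt

lemma hermiteGaussian_add_two (n : ℕ) (x : ℝ) :
    hermiteGaussian (n + 2) x =
      2 * x * hermiteGaussian (n + 1) x - 2 * (n + 1) * hermiteGaussian n x := by
  simp only [hermiteGaussian, polyGaussian, hermiteH_add_two, eval_sub, eval_mul, eval_ofNat,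
    eval_X, eval_C]
  ring

lemma hasDerivAt_hermiteGaussian (n : ℕ) (x : ℝ) :
    HasDerivAt (hermiteGaussian n) (x * hermiteGaussian n x - hermiteGaussian (n + 1) x) x := by
  refine (hasDerivAt_polyGaussian _ x).congr_deriv ?_
  simp only [hermiteGaussian, polyGaussian, hermiteH_succ, eval_sub, eval_mul, eval_ofNat, eval_X]
  ring

lemma hasDerivAt_deriv_hermiteGaussian (n : ℕ) (x : ℝ) :
    HasDerivAt (fun y => y * hermiteGaussian n y - hermiteGaussian (n + 1) y)
      ((x ^ 2 - (2 * n + 1)) * hermiteGaussian n x) x := by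
  refine (((hasDerivAt_id x).mul (hasDerivAt_hermiteGaussian n x)).sub
    (hasDerivAt_hermiteGaussian (n + 1) x)).congr_deriv ?_
  rw [hermiteGaussian_add_two, id]
  ring

lemma hermiteGaussian_zero_odd (m : ℕ) : hermiteGaussian (2 * m + 1) 0 = 0 := by
  simp [hermiteGaussian, polyGaussian, eval_zero_hermiteH_odd]

lemma hermiteGaussian_zero_even (m : ℕ) :
    hermiteGaussian (2 * m) 0 = (-1) ^ m * (4 ^ m * m.factorial * centralBinomRatio m) := by
  simp [hermiteGaussian, polyGaussian, eval_zero_hermiteH_even]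

end HermiteGaussian

section HermiteEquation

variable {u v : ℝ → ℝ} {c x : ℝ}

lemma hermite_energy_le (hu : ∀ t, HasDerivAt u (v t) t)
    (hv : ∀ t, HasDerivAt v ((t ^ 2 - c) * u t) t) (hx : 0 ≤ x) :
    v x ^ 2 + (c - x ^ 2) * u x ^ 2 ≤ v 0 ^ 2 + c * u 0 ^ 2 := by
  have hE (t : ℝ) : HasDerivAt (fun t => v t ^ 2 + (c - t ^ 2) * u t ^ 2) (-2 * t * u t ^ 2) t := by
    refine (((hv t).pow 2).add
      (((hasDerivAt_pow 2 t).const_sub c).mul ((hu t).pow 2))).congr_deriv ?_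
    simp only [Pi.pow_apply]
    push_cast
    ring
  have hanti : AntitoneOn (fun t => v t ^ 2 + (c - t ^ 2) * u t ^ 2) (Set.Ici 0) := by
    refine antitoneOn_of_hasDerivWithinAt_nonpos (convex_Ici 0)
      (fun t _ => (hE t).continuousAt.continuousWithinAt)
      (fun t _ => (hE t).hasDerivWithinAt) fun t ht => ?_
    rw [interior_Ici, Set.mem_Ioi] at ht
    nlinarith [mul_nonneg ht.le (sq_nonneg (u t))]
  simpa using hanti (Set.mem_Ici.2 le_rfl) (Set.mem_Ici.2 hx) hx

lemma abs_deriv_le_sqrt_hermite_energy (hu : ∀ t, HasDerivAt u (v t) t)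
    (hv : ∀ t, HasDerivAt v ((t ^ 2 - c) * u t) t) (hx : 0 ≤ x) (hc : x ^ 2 ≤ c) :
    |v x| ≤ √(v 0 ^ 2 + c * u 0 ^ 2) :=
  Real.abs_le_sqrt <| by
    nlinarith [hermite_energy_le hu hv hx, mul_nonneg (sub_nonneg.2 hc) (sq_nonneg (u x))]

lemma abs_le_sqrt_hermite_energy (hu : ∀ t, HasDerivAt u (v t) t)
    (hv : ∀ t, HasDerivAt v ((t ^ 2 - c) * u t) t) (hx : 0 ≤ x) (hc : x ^ 2 + 1 ≤ c) :
    |u x| ≤ √(v 0 ^ 2 + c * u 0 ^ 2) :=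
  Real.abs_le_sqrt <| by
    nlinarith [hermite_energy_le hu hv hx, mul_nonneg (sub_nonneg.2 hc) (sq_nonneg (u x)),
      sq_nonneg (v x)]

lemma mul_integral_eq_of_hermite_equation (hu : Continuous u)
    (hv : ∀ t, HasDerivAt v ((t ^ 2 - c) * u t) t) (a b : ℝ) :
    c * ∫ t in a..b, u t = v a - v b + ∫ t in a..b, t ^ 2 * u t := by
  have h := intervalIntegral.integral_eq_sub_of_hasDerivAt (fun t _ => hv t)
    (Continuous.intervalIntegrable (by fun_prop) a b)
  simp only [sub_mul] at h
  rw [intervalIntegral.integral_sub (Continuous.intervalIntegrable (by fun_prop) a b)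
    (Continuous.intervalIntegrable (by fun_prop) a b), intervalIntegral.integral_const_mul] at h
  linarith

lemma mul_abs_integral_le_sqrt_hermite_energy (hu : ∀ t, HasDerivAt u (v t) t)
    (hv : ∀ t, HasDerivAt v ((t ^ 2 - c) * u t) t) (hx : 0 ≤ x) (hc : x ^ 2 + 1 ≤ c) :
    c * |∫ t in 0..x, u t| ≤ (2 + x ^ 3) * √(v 0 ^ 2 + c * u 0 ^ 2) := by
  set E := √(v 0 ^ 2 + c * u 0 ^ 2)
  have hint : |∫ t in 0..x, t ^ 2 * u t| ≤ x ^ 2 * E * x := by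
    have h := intervalIntegral.norm_integral_le_of_norm_le_const (a := 0) (b := x)
      (f := fun t => t ^ 2 * u t) (C := x ^ 2 * E) fun t ht => ?_
    · simpa [abs_of_nonneg hx] using h
    rw [Set.uIoc_of_le hx] at ht
    have hsq : t ^ 2 ≤ x ^ 2 := pow_le_pow_left₀ ht.1.le ht.2 2
    rw [norm_mul, Real.norm_of_nonneg (sq_nonneg t)]
    exact mul_le_mul hsq (abs_le_sqrt_hermite_energy hu hv ht.1.le (by linarith))
      (norm_nonneg _) (sq_nonneg x)
  have hv0 : |v 0| ≤ E := abs_deriv_le_sqrt_hermite_energy hu hv le_rfl (by nlinarith)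
  have hvx : |v x| ≤ E := abs_deriv_le_sqrt_hermite_energy hu hv hx (by linarith)
  calc c * |∫ t in 0..x, u t| = |v 0 - v x + ∫ t in 0..x, t ^ 2 * u t| := by
        have hcont : Continuous u := continuous_iff_continuousAt.2 fun t => (hu t).continuousAt
        rw [← mul_integral_eq_of_hermite_equation hcont hv, abs_mul,
          abs_of_nonneg (by nlinarith : 0 ≤ c)]
    _ ≤ |v 0| + |v x| + |∫ t in 0..x, t ^ 2 * u t| :=
        (abs_add_le _ _).trans (by gcongr; exact abs_sub _ _)
    _ ≤ E + E + x ^ 2 * E * x := by gcongr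
    _ = (2 + x ^ 3) * E := by ring

end HermiteEquation

section EvenHermiteSum

/-- The sum `∑ h₂ₘ(x) / (4ᵐ m!)` over `m < M`, with `hₙ` the unnormalised Hermite function. Times
`√2` it is the sum of the terms of index below `2M` of the e-product `⟨cos (x ·), δ⟩`. -/
noncomputable def evenHermiteSum (M : ℕ) (x : ℝ) : ℝ :=
  ∑ m ∈ Finset.range M, hermiteGaussian (2 * m) x / (4 ^ m * m.factorial)

lemma evenHermiteSum_zero_right (M : ℕ) :
    evenHermiteSum M 0 = ∑ m ∈ Finset.range M, (-1) ^ m * centralBinomRatio m := by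
  refine Finset.sum_congr rfl fun m _ => ?_
  rw [hermiteGaussian_zero_even]
  field_simp

lemma hasDerivAt_evenHermiteSum (M : ℕ) (x : ℝ) :
    HasDerivAt (evenHermiteSum (M + 1))
      (-(2 * 4 ^ M * M.factorial : ℝ)⁻¹ * hermiteGaussian (2 * M + 1) x) x := by
  have hsucc (M : ℕ) : evenHermiteSum (M + 1) = fun y =>
      evenHermiteSum M y + hermiteGaussian (2 * M) y / (4 ^ M * M.factorial) :=
    funext fun y => Finset.sum_range_succ _ M
  induction M with
  | zero =>
    simp only [hsucc, evenHermiteSum, Finset.range_zero, Finset.sum_empty]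
    refine (((hasDerivAt_hermiteGaussian 0 x).div_const _).const_add 0).congr_deriv ?_
    simp only [hermiteGaussian, polyGaussian, hermiteH_zero, hermiteH_one, mul_zero, zero_add,
      eval_one, eval_mul, eval_ofNat, eval_X, pow_zero, Nat.factorial_zero, Nat.cast_one]
    ring
  | succ M ih =>
    rw [hsucc (M + 1)]
    refine (ih.add ((hasDerivAt_hermiteGaussian (2 * (M + 1)) x).div_const _)).congr_deriv ?_
    rw [show 2 * (M + 1) + 1 = 2 * M + 1 + 2 by ring, hermiteGaussian_add_two,
      show 2 * (M + 1) = 2 * M + 1 + 1 by ring, Nat.factorial_succ, pow_succ]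
    push_cast
    field_simp
    ring

lemma evenHermiteSum_sub_eq_integral (M : ℕ) (x : ℝ) :
    evenHermiteSum (M + 1) x - evenHermiteSum (M + 1) 0 =
      -(2 * 4 ^ M * M.factorial : ℝ)⁻¹ * ∫ t in 0..x, hermiteGaussian (2 * M + 1) t := by
  rw [← intervalIntegral.integral_const_mul]
  exact (intervalIntegral.integral_eq_sub_of_hasDerivAt
    (fun t _ => hasDerivAt_evenHermiteSum M t)
    ((continuous_polyGaussian _).const_mul _ |>.intervalIntegrable 0 x)).symm

lemma mul_abs_integral_hermiteGaussian_odd_le {M : ℕ} {x : ℝ} (hx : 0 ≤ x)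
    (hM : x ^ 2 + 1 ≤ 4 * M + 3) :
    (4 * M + 3) * |∫ t in 0..x, hermiteGaussian (2 * M + 1) t| ≤
      (2 + x ^ 3) * (4 ^ (M + 1) * (M + 1).factorial * centralBinomRatio (M + 1)) := by
  have hc : 2 * ((2 * M + 1 : ℕ) : ℝ) + 1 = 4 * M + 3 := by push_cast; ring
  have h := mul_abs_integral_le_sqrt_hermite_energy (hasDerivAt_hermiteGaussian (2 * M + 1))
    (hasDerivAt_deriv_hermiteGaussian (2 * M + 1)) hx (hM.trans_eq hc.symm)
  have hpos : 0 < 4 ^ (M + 1) * (M + 1).factorial * centralBinomRatio (M + 1) :=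
    mul_pos (by positivity) (centralBinomRatio_pos _)
  rwa [hc, hermiteGaussian_zero_odd, show 2 * M + 1 + 1 = 2 * (M + 1) by ring,
    hermiteGaussian_zero_even, mul_zero, zero_sub, zero_pow two_ne_zero, mul_zero, add_zero,
    neg_sq, Real.sqrt_sq_eq_abs, abs_mul, abs_neg_one_pow, one_mul,
    abs_of_pos hpos] at h

lemma abs_evenHermiteSum_sub_le {M : ℕ} {x : ℝ} (hx : 0 ≤ x) (hM : x ^ 2 + 1 ≤ 4 * M + 3) :
    |evenHermiteSum (M + 1) x - evenHermiteSum (M + 1) 0| ≤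
      (2 + x ^ 3) * centralBinomRatio M := by
  have hb := centralBinomRatio_pos M
  have hint := mul_abs_integral_hermiteGaussian_odd_le hx hM
  rw [← le_div_iff₀' (by positivity)] at hint
  calc |evenHermiteSum (M + 1) x - evenHermiteSum (M + 1) 0|
      = (2 * 4 ^ M * M.factorial : ℝ)⁻¹ * |∫ t in 0..x, hermiteGaussian (2 * M + 1) t| := by
        rw [evenHermiteSum_sub_eq_integral, abs_mul, abs_neg, abs_of_nonneg (by positivity)]
    _ ≤ (2 * 4 ^ M * M.factorial : ℝ)⁻¹ * ((2 + x ^ 3) *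
          (4 ^ (M + 1) * (M + 1).factorial * centralBinomRatio (M + 1)) / (4 * M + 3)) := by
        gcongr
    _ = (2 + x ^ 3) * centralBinomRatio M * ((2 * M + 1) / (4 * M + 3)) := by
        rw [Nat.factorial_succ, pow_succ]
        push_cast
        field_simp
        linear_combination 2 * 4 ^ M * centralBinomRatio_succ M
    _ ≤ (2 + x ^ 3) * centralBinomRatio M :=
        mul_le_of_le_one_right (by positivity) ((div_le_one (by positivity)).2 (by linarith))

lemma tendsto_evenHermiteSum {x : ℝ} (hx : 0 ≤ x) :
    Tendsto (fun M => evenHermiteSum M x) atTop (𝓝 (√2)⁻¹) := by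
  rw [← tendsto_add_atTop_iff_nat 1]
  have hzero : Tendsto (fun M => evenHermiteSum (M + 1) 0) atTop (𝓝 (√2)⁻¹) := by
    simp_rw [evenHermiteSum_zero_right]
    exact (tendsto_add_atTop_iff_nat 1).2 tendsto_sum_neg_one_pow_mul_centralBinomRatio
  have hdiff : Tendsto (fun M => evenHermiteSum (M + 1) x - evenHermiteSum (M + 1) 0) atTop
      (𝓝 0) := by
    refine squeeze_zero_norm' ?_
      (by simpa using tendsto_centralBinomRatio.const_mul (2 + x ^ 3))
    filter_upwards [eventually_ge_atTop ⌈x ^ 2⌉₊] with M hM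
    have hxM : x ^ 2 ≤ M := Nat.ceil_le.1 hM
    exact abs_evenHermiteSum_sub_le hx (by linarith [sq_nonneg x])
  simpa using hdiff.add hzero

end EvenHermiteSum

section GaussianFourier

lemma integrable_eval_mul_exp_neg_mul_sq {b : ℝ} (hb : 0 < b) (P : ℝ[X]) :
    Integrable fun x : ℝ => P.eval x * Real.exp (-b * x ^ 2) := by
  induction P using Polynomial.induction_on' with
  | add P Q hP hQ =>
    simp only [eval_add, add_mul]
    exact hP.add hQ
  | monomial n a =>
    have h := integrable_rpow_mul_exp_neg_mul_sq hb (s := n)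
      (neg_one_lt_zero.trans_le n.cast_nonneg)
    simpa only [Real.rpow_natCast, eval_monomial, mul_assoc] using h.const_mul a

lemma integrable_polyGaussian (P : ℝ[X]) : Integrable (polyGaussian P) := by
  refine (integrable_eval_mul_exp_neg_mul_sq one_half_pos P).congr
    (Eventually.of_forall fun x => ?_)
  simp only [polyGaussian, neg_mul, one_div_mul_eq_div, neg_div]

lemma integrable_polyGaussian_mul_cexp (P : ℝ[X]) (ξ : ℝ) :
    Integrable fun x => (polyGaussian P x : ℂ) * Complex.exp (ξ * x * Complex.I) := by
  refine (integrable_polyGaussian P).ofReal.mul_bdd (c := 1) (by fun_prop)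
    (Eventually.of_forall fun x => ?_)
  rw [← Complex.ofReal_mul, Complex.norm_exp_ofReal_mul_I]

/-- The Fourier transform at frequency `ξ` of `P(x) exp (-x² / 2)`, with kernel `exp (iξx)`, as a
linear function of the polynomial `P`. -/
noncomputable def gaussianFourier (ξ : ℝ) : ℝ[X] →ₗ[ℝ] ℂ where
  toFun P := ∫ x, (polyGaussian P x : ℂ) * Complex.exp (ξ * x * Complex.I)
  map_add' P Q := by
    rw [← integral_add (integrable_polyGaussian_mul_cexp P ξ)
      (integrable_polyGaussian_mul_cexp Q ξ)]
    simp only [polyGaussian, eval_add, add_mul, Complex.ofReal_add]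
  map_smul' a P := by
    rw [RingHom.id_apply, ← integral_smul]
    simp only [polyGaussian, eval_smul, smul_eq_mul, Complex.real_smul, Complex.ofReal_mul,
      mul_assoc]

lemma gaussianFourier_apply (ξ : ℝ) (P : ℝ[X]) :
    gaussianFourier ξ P = ∫ x, (polyGaussian P x : ℂ) * Complex.exp (ξ * x * Complex.I) := rfl

lemma gaussianFourier_C_mul (ξ a : ℝ) (P : ℝ[X]) :
    gaussianFourier ξ (C a * P) = a * gaussianFourier ξ P := by
  rw [← smul_eq_C_mul, map_smul, Complex.real_smul]

lemma gaussianFourier_X_mul (ξ : ℝ) (P : ℝ[X]) :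
    gaussianFourier ξ (X * P) =
      gaussianFourier ξ (derivative P) + ξ * Complex.I * gaussianFourier ξ P := by
  have hexp (x : ℝ) : HasDerivAt (fun x : ℝ => Complex.exp (ξ * x * Complex.I))
      (ξ * Complex.I * Complex.exp (ξ * x * Complex.I)) x := by
    have h := ((Complex.ofRealCLM.hasDerivAt (x := x)).const_mul (ξ : ℂ)).mul_const Complex.I
    exact h.cexp.congr_deriv (by
      simp only [Complex.ofRealCLM_apply, Complex.ofReal_one]
      ring)
  have hint := integral_mul_deriv_eq_deriv_mul_of_integrable
    (fun x _ => (hasDerivAt_polyGaussian P x).ofReal_comp) (fun x _ => hexp x)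
    (((integrable_polyGaussian_mul_cexp P ξ).const_mul (ξ * Complex.I)).congr
      (Eventually.of_forall fun x => mul_left_comm _ _ _))
    (integrable_polyGaussian_mul_cexp _ ξ) (integrable_polyGaussian_mul_cexp P ξ)
  simp only [mul_left_comm _ ((ξ : ℂ) * Complex.I)] at hint
  rw [integral_const_mul, ← gaussianFourier_apply, ← gaussianFourier_apply, map_sub] at hint
  linear_combination -hint

lemma gaussianFourier_one (ξ : ℝ) :
    gaussianFourier ξ 1 = (√(2 * Real.pi) * polyGaussian 1 ξ : ℝ) := by
  have h := fourierIntegral_gaussian (b := 1 / 2) (by norm_num) ξ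
  have hpi : (Real.pi / (1 / 2) : ℂ) ^ (1 / 2 : ℂ) = √(2 * Real.pi) := by
    rw [Real.sqrt_eq_rpow, Complex.ofReal_cpow (by positivity)]
    push_cast
    congr 1
    ring
  rw [hpi] at h
  rw [gaussianFourier_apply]
  convert h using 1
  · refine integral_congr_ae (Eventually.of_forall fun x => ?_)
    simp only [polyGaussian, eval_one, one_mul]
    push_cast
    rw [mul_comm]
    congr 2 <;> ring
  · simp only [polyGaussian, eval_one, one_mul]
    push_cast
    congr 2
    ring

lemma gaussianFourier_hermiteH (ξ : ℝ) (n : ℕ) :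
    gaussianFourier ξ (hermiteH n) =
      Complex.I ^ n * (√(2 * Real.pi) * hermiteGaussian n ξ : ℝ) := by
  have hC : (2 : ℝ[X]) = C 2 := rfl
  induction n using Nat.twoStepInduction with
  | zero => rw [hermiteH_zero, gaussianFourier_one, hermiteGaussian, hermiteH_zero]; simp
  | one =>
    rw [hermiteH_one, hC, ← mul_one X, gaussianFourier_C_mul, gaussianFourier_X_mul,
      derivative_one, map_zero, gaussianFourier_one, hermiteGaussian, hermiteH_one]
    simp only [polyGaussian, eval_one, eval_mul, eval_ofNat, eval_X]
    push_cast
    ring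
  | more n ih₀ ih₁ =>
    rw [hermiteH_add_two, map_sub, gaussianFourier_C_mul, mul_assoc, hC, gaussianFourier_C_mul,
      gaussianFourier_X_mul, derivative_hermiteH_succ, gaussianFourier_C_mul, ih₀, ih₁,
      hermiteGaussian_add_two]
    push_cast
    linear_combination
      2 * Complex.I ^ n * (n + 1) * √(2 * Real.pi) * hermiteGaussian n ξ * Complex.I_sq

lemma integral_cos_mul_hermiteGaussian (ξ : ℝ) (n : ℕ) :
    ∫ x, Real.cos (ξ * x) * hermiteGaussian n x =
      (Complex.I ^ n).re * (√(2 * Real.pi) * hermiteGaussian n ξ) := by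
  rw [← Complex.re_mul_ofReal, ← gaussianFourier_hermiteH, gaussianFourier_apply,
    ← RCLike.re_eq_complex_re, ← integral_re (integrable_polyGaussian_mul_cexp _ ξ)]
  congr 1 with x
  rw [RCLike.re_eq_complex_re, Complex.re_ofReal_mul, ← Complex.ofReal_mul,
    Complex.exp_ofReal_mul_I_re, mul_comm, hermiteGaussian]

end GaussianFourier

section EProduct

lemma hermiteFun_eq_hermiteGaussian (n : ℕ) (x : ℝ) :
    hermiteFun n x = (√(2 ^ n * n.factorial * √Real.pi))⁻¹ * hermiteGaussian n x :=
  mul_assoc _ _ _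

lemma integrable_cos_mul_hermiteFun (ξ : ℝ) (n : ℕ) :
    Integrable fun x => Real.cos (ξ * x) * hermiteFun n x := by
  simp_rw [hermiteFun_eq_hermiteGaussian]
  exact ((integrable_polyGaussian _).const_mul _).bdd_mul (c := 1) (by fun_prop)
    (Eventually.of_forall fun x => Real.abs_cos_le_one _)

lemma integral_cos_mul_hermiteFun_mul_hermiteFun (ξ y : ℝ) (n : ℕ) :
    (∫ x, Real.cos (ξ * x) * hermiteFun n x) * hermiteFun n y =
      √2 * (Complex.I ^ n).re * hermiteGaussian n ξ * hermiteGaussian n y /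
        (2 ^ n * n.factorial) := by
  simp only [hermiteFun_eq_hermiteGaussian, mul_left_comm (Real.cos _)]
  rw [integral_const_mul, integral_cos_mul_hermiteGaussian, Real.sqrt_mul zero_le_two]
  have hsq := Real.sq_sqrt (show 0 ≤ 2 ^ n * n.factorial * √Real.pi by positivity)
  field_simp
  rw [hsq]

lemma integral_cos_mul_hermiteFun_odd (ξ : ℝ) (m : ℕ) :
    (∫ x, Real.cos (ξ * x) * hermiteFun (2 * m + 1) x) * hermiteFun (2 * m + 1) 0 = 0 := by
  rw [integral_cos_mul_hermiteFun_mul_hermiteFun, hermiteGaussian_zero_odd, mul_zero, zero_div]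

lemma integral_cos_mul_hermiteFun_even (ξ : ℝ) (m : ℕ) :
    (∫ x, Real.cos (ξ * x) * hermiteFun (2 * m) x) * hermiteFun (2 * m) 0 =
      √2 * (hermiteGaussian (2 * m) ξ / (4 ^ m * m.factorial)) := by
  have hI : (Complex.I ^ (2 * m)).re = (-1) ^ m := by
    rw [pow_mul, Complex.I_sq]
    exact_mod_cast Complex.ofReal_re ((-1) ^ m)
  have hsign : ((-1 : ℝ) ^ m) ^ 2 = 1 := by rw [← pow_mul, mul_comm, pow_mul]; norm_num
  rw [integral_cos_mul_hermiteFun_mul_hermiteFun, hI, hermiteGaussian_zero_even,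
    centralBinomRatio_eq_factorial_div, pow_mul, show (2 : ℝ) ^ 2 = 4 by norm_num]
  field_simp
  rw [hsign, one_mul]

lemma sum_range_of_odd_eq_zero {A : Type*} [AddCommMonoid A] {f : ℕ → A}
    (hf : ∀ m, f (2 * m + 1) = 0) (N : ℕ) :
    ∑ n ∈ Finset.range N, f n = ∑ m ∈ Finset.range ((N + 1) / 2), f (2 * m) := by
  induction N with
  | zero => simp
  | succ N ih =>
    rw [Finset.sum_range_succ, ih]
    obtain ⟨m, rfl | rfl⟩ := N.even_or_odd'
    · rw [show (2 * m + 1 + 1) / 2 = m + 1 by omega, show (2 * m + 1) / 2 = m by omega,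
        Finset.sum_range_succ]
    · rw [hf, add_zero, show (2 * m + 1 + 1 + 1) / 2 = (2 * m + 1 + 1) / 2 by omega]

lemma sum_integral_cos_mul_hermiteFun (ξ : ℝ) (N : ℕ) :
    ∑ n ∈ Finset.range N, (∫ x, Real.cos (ξ * x) * hermiteFun n x) * hermiteFun n 0 =
      √2 * evenHermiteSum ((N + 1) / 2) ξ := by
  rw [sum_range_of_odd_eq_zero (integral_cos_mul_hermiteFun_odd ξ), evenHermiteSum,
    Finset.mul_sum]
  exact Finset.sum_congr rfl fun m _ => integral_cos_mul_hermiteFun_even ξ m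

theorem eProduct_cos_delta_general (ξ : ℝ) :
    (∀ n, Integrable fun x : ℝ => Real.cos (ξ * x) * hermiteFun n x) ∧
    Tendsto (fun N => ∑ n ∈ Finset.range N,
        (∫ x : ℝ, Real.cos (ξ * x) * hermiteFun n x) * hermiteFun n 0)
      atTop (𝓝 1) := by
  refine ⟨integrable_cos_mul_hermiteFun ξ, ?_⟩
  have hcos (x : ℝ) : Real.cos (ξ * x) = Real.cos (|ξ| * x) := by
    rcases abs_choice ξ with h | h <;> simp [h]
  have hhalf : Tendsto (fun N : ℕ => (N + 1) / 2) atTop atTop :=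
    (Nat.tendsto_div_const_atTop two_ne_zero).comp (tendsto_add_atTop_nat 1)
  simp_rw [hcos, sum_integral_cos_mul_hermiteFun]
  simpa using ((tendsto_evenHermiteSum (abs_nonneg ξ)).comp hhalf).const_mul √2

end EProduct

/-- the series `∑ₙ (∫ cos(x) eₙ(x) dx) · eₙ(0)` (the e-product
`⟨cos, δ⟩_e`) converges to `1`; each integral converges absolutely. -/
theorem eProduct_cos_delta :
    (∀ n, Integrable (fun x : ℝ => Real.cos x * hermiteFun n x)
        (volume : Measure ℝ)) ∧
    Tendsto (fun N => ∑ n ∈ Finset.range N,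
        (∫ x : ℝ, Real.cos x * hermiteFun n x) * hermiteFun n 0)
      atTop (𝓝 1) := by
  simpa only [one_mul] using eProduct_cos_delta_general 1
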